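/- Let t ≥ 1 and a ≥ 1 be integers and let G_1, …, G_t be bipartite graphs, where G_i has bipartition (U_i, V_i) with |U_i| = |V_i| = a and the vertex sets U_1, V_1, …, U_t, V_t are pairwise disjoint. Let H be the simple graph on ∪_{i=1}^t (U_i ∪ V_i) whose edge set is the union of the edge sets of all G_i together with all pairs of distinct vertices inside V_i ∪ U_{i+1} for each i = 1, …, t-1 (i.e., each V_i ∪ U_{i+1} is made a clique). If some G_j has no perfect matching, then H has a vertex cut (L,S,R) with |S| < a. -/

import Mathlib

/-!
Put the blocks on a line in the order `U_1, V_1, U_2, V_2, …`: every edge of `H` joins vertices of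
equal or consecutive blocks. By Hall's theorem a graph `G_j` without a perfect matching has a set
`X ⊆ U_j` with fewer than `|X|` neighbours. Adding `X` to the blocks before `U_j`, and `V_j \ N(X)`
to the blocks after `V_j`, leaves the separator `(U_j \ X) ∪ N(X)`, of fewer than
`|U_j| = a` vertices.
-/

section VertexCuts

variable {W : Type*}

/-- A vertex cut `(L, S, R)` of `G`: a partition of the vertices in which the separator `S` may be
empty, the sides `L` and `R` are nonempty, and no edge joins the two sides. -/
structure IsVertexCut (G : SimpleGraph W) (L S R : Set W) : Prop where
  union_eq_univ : L ∪ S ∪ R = Set.univ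
  disjoint_left_separator : Disjoint L S
  disjoint_left_right : Disjoint L R
  disjoint_separator_right : Disjoint S R
  left_nonempty : L.Nonempty
  right_nonempty : R.Nonempty
  not_adj : ∀ u ∈ L, ∀ v ∈ R, ¬ G.Adj u v

theorem exists_finset_of_exists_isVertexCut [Finite W] {H : SimpleGraph W} {a : ℕ}
    (h : ∃ L S R : Set W, IsVertexCut H L S R ∧ S.encard < a) :
    ∃ L S R : Finset W,
      (∀ w, w ∈ L ∨ w ∈ S ∨ w ∈ R) ∧
      Disjoint L S ∧ Disjoint L R ∧ Disjoint S R ∧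
      L.Nonempty ∧ R.Nonempty ∧
      (∀ u ∈ L, ∀ v ∈ R, ¬ H.Adj u v) ∧
      S.card < a := by
  obtain ⟨L, S, R, hcut, hcard⟩ := h
  lift L to Finset W using L.toFinite
  lift S to Finset W using S.toFinite
  lift R to Finset W using R.toFinite
  exact ⟨L, S, R,
    fun w => by simpa [or_assoc] using Set.eq_univ_iff_forall.mp hcut.union_eq_univ w,
    mod_cast hcut.disjoint_left_separator, mod_cast hcut.disjoint_left_right,
    mod_cast hcut.disjoint_separator_right, mod_cast hcut.left_nonempty,
    mod_cast hcut.right_nonempty, hcut.not_adj, by simpa using hcard⟩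

end VertexCuts

section Matchings

variable {W : Type*} {G : SimpleGraph W} {A B : Set W}

theorem finite_neighborSet_of_isBipartiteWith (hG : G.IsBipartiteWith A B) (hA : A.Finite)
    (hB : B.Finite) (v : W) : (G.neighborSet v).Finite :=
  (hA.union hB).subset fun _ hw => by
    rcases hG.mem_of_adj hw with h | h
    exacts [Or.inr h.2, Or.inl h.2]

theorem exists_subset_encard_iUnion_neighborSet_lt (hG : G.IsBipartiteWith A B)
    (hfin : ∀ v, (G.neighborSet v).Finite)
    (hno : ¬ ∃ M : G.Subgraph, M.IsMatching ∧ A ⊆ M.verts) :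
    ∃ X ⊆ A, (⋃ x ∈ X, G.neighborSet x).encard < X.encard := by
  have : G.LocallyFinite := fun v => (hfin v).fintype
  obtain ⟨X, hXA, hlt⟩ : ∃ X ⊆ A, (⋃ x ∈ X, G.neighborSet x).ncard < X.ncard := by
    by_contra! hall
    obtain ⟨M, hAM, hM⟩ := SimpleGraph.exists_isMatching_of_forall_ncard_le hG hall
    exact hno ⟨M, hM, hAM⟩
  have hX : X.Finite := Set.finite_of_ncard_pos (Nat.zero_lt_of_lt hlt)
  refine ⟨X, hXA, ?_⟩
  rw [← hX.cast_ncard_eq, ← (hX.biUnion fun x _ => hfin x).cast_ncard_eq]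
  exact mod_cast hlt

theorem right_subset_verts_of_left_subset_verts {M : G.Subgraph} (hM : M.IsMatching)
    (hG : G.IsBipartiteWith A B) (hAM : A ⊆ M.verts) (hB : B.Finite)
    (hcard : B.encard ≤ A.encard) : B ⊆ M.verts := by
  have hpartner : ∀ u : W, ∃ v, u ∈ A → M.Adj u v := fun u => by
    by_cases hu : u ∈ A
    · exact (hM (hAM hu)).exists.imp fun _ h _ => h
    · exact ⟨u, fun h => absurd h hu⟩
  choose partner hpartner using hpartner
  have hmaps : partner '' A ⊆ B := by
    rintro _ ⟨u, hu, rfl⟩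
    exact hG.mem_of_mem_adj hu (hpartner u hu).adj_sub
  have hinj : Set.InjOn partner A := fun u hu v hv huv =>
    hM.eq_of_adj_right (hpartner u hu) (huv ▸ hpartner v hv)
  have himage : partner '' A = B :=
    (hB.subset hmaps).eq_of_subset_of_encard_le hmaps (hinj.encard_image.symm ▸ hcard)
  rw [← himage]
  rintro _ ⟨u, hu, rfl⟩
  exact (hpartner u hu).snd_mem

end Matchings

section Levels

variable {W : Type*} {H : SimpleGraph W} {level : W → ℤ} {m : ℤ} {A B : Set W}

theorem isVertexCut_of_level (hstep : ∀ u v, H.Adj u v → level v ≤ level u + 1)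
    (hA : ∀ w, w ∈ A ↔ level w = m) (hB : ∀ w, w ∈ B ↔ level w = m + 1)
    {X N : Set W} (hXA : X ⊆ A) (hNB : N ⊆ B) (hXN : ∀ u ∈ X, ∀ v ∈ B, H.Adj u v → v ∈ N)
    (hX : X.Nonempty) (hBN : (B \ N).Nonempty) :
    IsVertexCut H ({w | level w < m} ∪ X) (A \ X ∪ N) (B \ N ∪ {w | m + 1 < level w}) where
  union_eq_univ := by
    refine Set.eq_univ_of_forall fun w => ?_
    have : level w < m ∨ level w = m ∨ level w = m + 1 ∨ m + 1 < level w := by lia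
    grind
  disjoint_left_separator := by
    rw [Set.disjoint_left]
    grind
  disjoint_left_right := by
    rw [Set.disjoint_left]
    grind
  disjoint_separator_right := by
    rw [Set.disjoint_left]
    grind
  left_nonempty := hX.inr
  right_nonempty := hBN.inl
  not_adj := by
    rintro u ((hu : level u < m) | hu) v (⟨hvB, hvN⟩ | (hv : m + 1 < level v)) huv
    · linarith [hstep u v huv, (hB v).mp hvB]
    · linarith [hstep u v huv]
    · exact hvN (hXN u hu v hvB huv)
    · linarith [hstep u v huv, (hA u).mp (hXA hu)]

theorem exists_isVertexCut_of_not_exists_isMatching {G : SimpleGraph W}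
    (hstep : ∀ u v, H.Adj u v → level v ≤ level u + 1)
    (hA : ∀ w, w ∈ A ↔ level w = m) (hB : ∀ w, w ∈ B ↔ level w = m + 1)
    (hG : G.IsBipartiteWith A B) (hHG : H.between A B ≤ G)
    (hBfin : B.Finite) (hcard : A.encard ≤ B.encard)
    (hno : ¬ ∃ M : G.Subgraph, M.IsMatching ∧ A ⊆ M.verts) :
    ∃ L S R : Set W, IsVertexCut H L S R ∧ S.encard < A.encard := by
  have hAfin : A.Finite := hBfin.finite_of_encard_le hcard
  obtain ⟨X, hXA, hlt⟩ := exists_subset_encard_iUnion_neighborSet_lt hG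
    (finite_neighborSet_of_isBipartiteWith hG hAfin hBfin) hno
  set N := ⋃ x ∈ X, G.neighborSet x
  have hNB : N ⊆ B :=
    Set.iUnion₂_subset fun x hx => SimpleGraph.isBipartiteWith_neighborSet_subset hG (hXA hx)
  have hXN : ∀ u ∈ X, ∀ v ∈ B, H.Adj u v → v ∈ N := fun u hu v hv huv =>
    Set.mem_biUnion hu (hHG ⟨huv, Or.inl ⟨hXA hu, hv⟩⟩)
  have hX : X.Nonempty := Set.encard_pos.mp (pos_of_gt hlt)
  have hN_lt : N.encard < B.encard := hlt.trans_le ((Set.encard_le_encard hXA).trans hcard)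
  have hBN : (B \ N).Nonempty :=
    Set.sdiff_nonempty.mpr fun hsub => hN_lt.not_ge (Set.encard_le_encard hsub)
  refine ⟨_, _, _, isVertexCut_of_level hstep hA hB hXA hNB hXN hX hBN, ?_⟩
  calc (A \ X ∪ N).encard
      ≤ (A \ X).encard + N.encard := Set.encard_union_le _ _
    _ < (A \ X).encard + X.encard :=
        (ENat.add_lt_add_iff_left hAfin.sdiff.encard_lt_top.ne).mpr hlt
    _ = A.encard := Set.encard_sdiff_add_encard_of_subset hXA

theorem exists_level_of_disjoint_blocks {t : ℕ} {U V : ℕ → Set W}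
    (hdisjUV : ∀ i < t, ∀ j < t, Disjoint (U i) (V j))
    (hdisjUU : ∀ i < t, ∀ j < t, i ≠ j → Disjoint (U i) (U j))
    (hdisjVV : ∀ i < t, ∀ j < t, i ≠ j → Disjoint (V i) (V j))
    (hcover : ∀ w : W, ∃ i < t, w ∈ U i ∨ w ∈ V i) :
    ∃ level : W → ℤ, (∀ i < t, ∀ w, w ∈ U i ↔ level w = 2 * i) ∧
      ∀ i < t, ∀ w, w ∈ V i ↔ level w = 2 * i + 1 := by
  simp only [Set.disjoint_left] at hdisjUV hdisjUU hdisjVV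
  have hlevel : ∀ w, ∃ n : ℤ, (∀ i < t, w ∈ U i ↔ n = 2 * i) ∧
      ∀ i < t, w ∈ V i ↔ n = 2 * i + 1 := by
    intro w
    obtain ⟨k, hk, hw | hw⟩ := hcover w
    · exact ⟨2 * k, by grind⟩
    · exact ⟨2 * k + 1, by grind⟩
  choose level hU hV using hlevel
  exact ⟨level, fun i hi w => hU w i hi, fun i hi w => hV w i hi⟩

end Levels

theorem stmt_11_general {W : Type*} (t a : ℕ) (U V : ℕ → Set W)
    (hdisjUV : ∀ i < t, ∀ j < t, Disjoint (U i) (V j))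
    (hdisjUU : ∀ i < t, ∀ j < t, i ≠ j → Disjoint (U i) (U j))
    (hdisjVV : ∀ i < t, ∀ j < t, i ≠ j → Disjoint (V i) (V j))
    (hcover : ∀ w : W, ∃ i < t, w ∈ U i ∨ w ∈ V i)
    (Gs : ℕ → SimpleGraph W)
    (hbip : ∀ i < t, ∀ u v : W, (Gs i).Adj u v →
      (u ∈ U i ∧ v ∈ V i) ∨ (u ∈ V i ∧ v ∈ U i))
    (H : SimpleGraph W)
    (hH : ∀ u v : W, H.Adj u v →
      (∃ i < t, (Gs i).Adj u v) ∨
      (∃ i, i + 1 < t ∧ (u ∈ V i ∪ U (i + 1)) ∧ (v ∈ V i ∪ U (i + 1))))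
    (j : ℕ) (hj : j < t) (hcardU : (U j).encard = a) (hcardV : (V j).encard = a)
    (hnopm : ¬ ∃ M : (Gs j).Subgraph, M.IsMatching ∧ U j ∪ V j ⊆ M.verts) :
    ∃ L S R : Set W, IsVertexCut H L S R ∧ S.encard < a := by
  obtain ⟨level, hlevelU, hlevelV⟩ :=
    exists_level_of_disjoint_blocks hdisjUV hdisjUU hdisjVV hcover
  have hstep : ∀ u v, H.Adj u v → level v ≤ level u + 1 := by
    intro u v huv
    rcases hH u v huv with ⟨i, hi, hG⟩ | ⟨i, hi, hu, hv⟩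
    · rcases hbip i hi u v hG with ⟨hu, hv⟩ | ⟨hu, hv⟩ <;> grind
    · rcases hu with hu | hu <;> rcases hv with hv | hv <;> grind
  -- No clique `V_i ∪ U_{i+1}` meets both `U_j` and `V_j`.
  have hHG : H.between (U j) (V j) ≤ Gs j := by
    rintro u v ⟨huv, hends⟩
    grind
  have hG : (Gs j).IsBipartiteWith (U j) (V j) := ⟨hdisjUV j hj j hj, fun u v => hbip j hj u v⟩
  have hcard : (U j).encard = (V j).encard := hcardU.trans hcardV.symm
  have hVfin : (V j).Finite := Set.finite_of_encard_eq_coe hcardV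
  have hno : ¬ ∃ M : (Gs j).Subgraph, M.IsMatching ∧ U j ⊆ M.verts := fun ⟨M, hM, hUM⟩ =>
    hnopm ⟨M, hM, Set.union_subset hUM <|
      right_subset_verts_of_left_subset_verts hM hG hUM hVfin hcard.ge⟩
  rw [← hcardU]
  exact exists_isVertexCut_of_not_exists_isMatching hstep (hlevelU j hj) (hlevelV j hj) hG hHG
    hVfin hcard.le hno

/-- Let `G_1, …, G_t` be bipartite graphs with bipartitions `(U_i, V_i)`,
`|U_i| = |V_i| = a`, on pairwise disjoint vertex sets, and let `H` be the graph whose edges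
are all edges of the `G_i` together with all pairs inside `V_i ∪ U_{i+1}` for
`i = 1, …, t-1` (each `V_i ∪ U_{i+1}` is made a clique). If some `G_j` has no perfect
matching, then `H` has a vertex cut `(L,S,R)` with `|S| < a`. -/
theorem stmt_11 {W : Type*} [Fintype W] [DecidableEq W]
    (t a : ℕ) (ht : 1 ≤ t) (ha : 1 ≤ a)
    (U V : ℕ → Finset W)
    (hcardU : ∀ i < t, (U i).card = a) (hcardV : ∀ i < t, (V i).card = a)
    (hdisjUV : ∀ i < t, ∀ j < t, Disjoint (U i) (V j))
    (hdisjUU : ∀ i < t, ∀ j < t, i ≠ j → Disjoint (U i) (U j))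
    (hdisjVV : ∀ i < t, ∀ j < t, i ≠ j → Disjoint (V i) (V j))
    (hcover : ∀ w : W, ∃ i < t, w ∈ U i ∨ w ∈ V i)
    (Gs : ℕ → SimpleGraph W)
    (hbip : ∀ i < t, ∀ u v : W, (Gs i).Adj u v →
      (u ∈ U i ∧ v ∈ V i) ∨ (u ∈ V i ∧ v ∈ U i))
    (H : SimpleGraph W)
    (hH : ∀ u v : W, H.Adj u v ↔
      (∃ i < t, (Gs i).Adj u v) ∨
      (∃ i, i + 1 < t ∧ u ≠ v ∧ (u ∈ V i ∪ U (i + 1)) ∧ (v ∈ V i ∪ U (i + 1))))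
    (j : ℕ) (hj : j < t)
    (hnopm : ¬ ∃ Mm : (Gs j).Subgraph, Mm.IsMatching ∧
      (↑(U j ∪ V j) : Set W) ⊆ Mm.verts) :
    ∃ L S R : Finset W,
      (∀ w, w ∈ L ∨ w ∈ S ∨ w ∈ R) ∧
      Disjoint L S ∧ Disjoint L R ∧ Disjoint S R ∧
      L.Nonempty ∧ R.Nonempty ∧
      (∀ u ∈ L, ∀ v ∈ R, ¬ H.Adj u v) ∧
      S.card < a :=
  exists_finset_of_exists_isVertexCut <| stmt_11_general t a (fun i => U i) (fun i => V i)
    (mod_cast hdisjUV) (mod_cast hdisjUU) (mod_cast hdisjVV) hcover Gs hbip H (by grind) j hj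
    (by simp [hcardU j hj]) (by simp [hcardV j hj]) (mod_cast hnopm)
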